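/- arXiv:1005.5725 — 4 statements merged into one kernel-verified Lean document; each statement's English description precedes it below -/
import Mathlib

section
/- Let ν ∈ N_d(n) and let j ∈ J(ν) be a break point of ν. Then the set {η ∈ N_d(n) : η ≼ ν and s_j(η) > s_j(ν)} has a unique maximal element ν^j; that is, there exists ν^j ∈ N_d(n) with ν^j ≼ ν and s_j(ν^j) > s_j(ν) such that every η ∈ N_d(n) with η ≼ ν and s_j(η) > s_j(ν) satisfies η ≼ ν^j. (GL_n instance of Lemma 2.2(1).) -/
/-- The `j`-th partial sum `s_j(ν) = ν_0 + … + ν_{j-1}` of a tuple (0-indexed). -/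
def psum (ν : ℕ → ℚ) (j : ℕ) : ℚ := ∑ i ∈ Finset.range j, ν i

/-- `ν` (given by its values on `{0, …, n-1}`) is a Newton point for `GL_n`
with endpoint `d`: nondecreasing, total sum `d`, and the partial sum at every
break point is an integer. -/
def IsNewton (n : ℕ) (d : ℤ) (ν : ℕ → ℚ) : Prop :=
  (∀ i, i + 1 < n → ν i ≤ ν (i + 1)) ∧
  psum ν n = (d : ℚ) ∧
  ∀ j, 0 < j → j < n → ν (j - 1) < ν j → ∃ m : ℤ, psum ν j = (m : ℚ)

/-- `j` is a break point of `ν` (in `1, …, n-1`; `ν (j-1) < ν j` is `ν_j < ν_{j+1}`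
in the 1-based notation of the paper). -/
def IsBreak (n : ℕ) (ν : ℕ → ℚ) (j : ℕ) : Prop := 0 < j ∧ j < n ∧ ν (j - 1) < ν j

/-- The dominance order: `ν' ≼ ν` iff `s_j(ν') ≥ s_j(ν)` for all `1 ≤ j ≤ n`. -/
def Preceq (n : ℕ) (ν' ν : ℕ → ℚ) : Prop := ∀ j, 1 ≤ j → j ≤ n → psum ν j ≤ psum ν' j

/-!
The partial sums of a Newton point form a convex function on `{0, …, n}` that takes integral values
wherever it bends. Let `z` be the least integral function with `z ≥ s(ν)` and `z_j > s_j(ν)`; the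
point `ν^j` is the one whose partial sums are the lower convex hull `h` of `z`. Since `h` can bend
only where it touches `z`, it is a Newton point; since it is the greatest convex minorant of `z`, it
lies above `s(ν)`. At `j` the hull either touches `z` or is straight, whereas `s(ν)` bends there, so
in both cases `h` lies strictly above `s(ν)`. Finally, if `η` is a competitor then `s(η) ≥ z ≥ h` at
the bends of `s(η)`, and between these `s(η)` is straight while `h` is convex, so `s(η) ≥ h`
everywhere.
-/

section Ring

variable {K : Type*} [CommRing K]

/-- The second difference of a sequence at the node `i + 1`, indexed by the left neighbour `i` to
avoid truncated subtraction. The sequence is convex, bends or is straight at `i + 1` according as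
this is nonnegative, positive or zero. -/
def secondDiff (f : ℕ → K) (i : ℕ) : K := f (i + 2) - 2 * f (i + 1) + f i

lemma secondDiff_sub (f g : ℕ → K) (i : ℕ) :
    secondDiff (f - g) i = secondDiff f i - secondDiff g i := by
  simp only [secondDiff, Pi.sub_apply]
  ring

lemma secondDiff_affine (c σ : K) (i : ℕ) : secondDiff (fun k : ℕ ↦ c + σ * k) i = 0 := by
  simp only [secondDiff]
  push_cast
  ring

variable [LinearOrder K]

/-- `h` is the lower convex hull of `g` on the integer interval `[a, b]`: a convex minorant with the
same endpoints that bends only where it touches `g`. -/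
structure IsLowerHull (a b : ℕ) (g h : ℕ → K) : Prop where
  left : h a = g a
  right : h b = g b
  le : ∀ i ∈ Set.Icc a b, h i ≤ g i
  convex : ∀ i, a ≤ i → i + 1 < b → 0 ≤ secondDiff h i
  eq_or_straight : ∀ i, a ≤ i → i + 1 < b → h (i + 1) = g (i + 1) ∨ secondDiff h i = 0

variable {a b : ℕ} {f g h u : ℕ → K}

lemma IsLowerHull.congr {h' : ℕ → K} (hh : IsLowerHull a b g h) (hab : a ≤ b)
    (heq : ∀ i ∈ Set.Icc a b, h' i = h i) : IsLowerHull a b g h' := by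
  have heq₂ (i : ℕ) (hi : a ≤ i) (hib : i + 1 < b) : secondDiff h' i = secondDiff h i := by
    simp only [secondDiff, heq i ⟨hi, by omega⟩, heq (i + 1) ⟨by omega, by omega⟩,
      heq (i + 2) ⟨by omega, by omega⟩]
  refine ⟨?_, ?_, fun i hi ↦ ?_, fun i hi hib ↦ ?_, fun i hi hib ↦ ?_⟩
  · rw [heq a ⟨le_rfl, hab⟩, hh.left]
  · rw [heq b ⟨hab, le_rfl⟩, hh.right]
  · rw [heq i hi]
    exact hh.le i hi
  · rw [heq₂ i hi hib]
    exact hh.convex i hi hib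
  · rw [heq₂ i hi hib, heq (i + 1) ⟨by omega, by omega⟩]
    exact hh.eq_or_straight i hi hib

lemma IsLowerHull.of_affine {c σ : K} (ha : c + σ * a = g a) (hb : c + σ * b = g b)
    (hle : ∀ i ∈ Set.Icc a b, c + σ * (i : K) ≤ g i) :
    IsLowerHull a b g (fun i ↦ c + σ * i) where
  left := ha
  right := hb
  le := hle
  convex i _ _ := (secondDiff_affine c σ i).ge
  eq_or_straight i _ _ := .inr (secondDiff_affine c σ i)

variable [IsStrictOrderedRing K]

lemma pos_of_pos_of_lt_of_secondDiff_nonneg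
    (hu : ∀ i, a ≤ i → i + 1 < b → 0 < u (i + 1) → 0 ≤ secondDiff u i)
    {i : ℕ} (hai : a ≤ i) (hpos : 0 < u (i + 1)) (hlt : u i < u (i + 1)) {k : ℕ}
    (hik : i ≤ k) (hkb : k < b) : 0 < u (k + 1) := by
  suffices 0 < u (k + 1) ∧ u k < u (k + 1) from this.1
  induction k, hik using Nat.le_induction with
  | base => exact ⟨hpos, hlt⟩
  | succ k hik ih =>
    obtain ⟨hk, hk_lt⟩ := ih (by omega)
    have hconv : 0 ≤ u (k + 2) - 2 * u (k + 1) + u k := hu k (hai.trans hik) hkb hk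
    constructor <;> linarith

/-- The discrete maximum principle: once `u` has become positive, it keeps growing up to `b`. -/
lemma nonpos_of_secondDiff_nonneg (ha : u a ≤ 0) (hb : u b ≤ 0)
    (hu : ∀ i, a ≤ i → i + 1 < b → 0 < u (i + 1) → 0 ≤ secondDiff u i) :
    ∀ i ∈ Set.Icc a b, u i ≤ 0 := by
  rintro i ⟨hai, hib⟩
  induction i, hai using Nat.le_induction with
  | base => exact ha
  | succ i hai ih =>
    by_contra! hpos
    obtain ⟨k, rfl⟩ : ∃ k, b = k + 1 := ⟨b - 1, by omega⟩
    have hlt : u i < u (i + 1) := (ih (by omega)).trans_lt hpos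
    exact hb.not_gt
      (pos_of_pos_of_lt_of_secondDiff_nonneg hu hai hpos hlt (by omega) k.lt_succ_self)

lemma le_of_secondDiff_le (ha : f a ≤ g a) (hb : f b ≤ g b)
    (hfg : ∀ i, a ≤ i → i + 1 < b → g (i + 1) < f (i + 1) → secondDiff g i ≤ secondDiff f i) :
    ∀ i ∈ Set.Icc a b, f i ≤ g i := by
  intro i hi
  refine sub_nonpos.1 (nonpos_of_secondDiff_nonneg (u := f - g) (sub_nonpos.2 ha)
    (sub_nonpos.2 hb) (fun i hai hib hpos ↦ ?_) i hi)
  rw [secondDiff_sub]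
  exact sub_nonneg.2 (hfg i hai hib (sub_pos.1 hpos))

namespace IsLowerHull

variable {m : ℕ}

lemma ge_of_convex (hh : IsLowerHull a b g h) (hfg : ∀ i ∈ Set.Icc a b, f i ≤ g i)
    (hf : ∀ i, a ≤ i → i + 1 < b → 0 ≤ secondDiff f i) : ∀ i ∈ Set.Icc a b, f i ≤ h i := by
  rintro i ⟨hai, hib⟩
  have hab := hai.trans hib
  refine le_of_secondDiff_le (hh.left ▸ hfg a ⟨le_rfl, hab⟩) (hh.right ▸ hfg b ⟨hab, le_rfl⟩)
    (fun i hai hib hlt ↦ ?_) i ⟨hai, hib⟩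
  have hne : h (i + 1) ≠ g (i + 1) := (hlt.trans_le (hfg _ ⟨by omega, by omega⟩)).ne
  rw [(hh.eq_or_straight i hai hib).resolve_left hne]
  exact hf i hai hib

lemma le_of_le_of_bend (hh : IsLowerHull a b g h) (ha : g a ≤ f a) (hb : g b ≤ f b)
    (hf : ∀ i, a ≤ i → i + 1 < b → 0 < secondDiff f i → g (i + 1) ≤ f (i + 1)) :
    ∀ i ∈ Set.Icc a b, h i ≤ f i := by
  refine le_of_secondDiff_le (hh.left ▸ ha) (hh.right ▸ hb) fun i hai hib hlt ↦ ?_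
  have hstraight : secondDiff f i ≤ 0 := by
    by_contra! hbend
    exact (hlt.trans_le (hh.le _ ⟨by omega, by omega⟩)).not_ge (hf i hai hib hbend)
  exact hstraight.trans (hh.convex i hai hib)

lemma lt_of_bend_of_lt (hh : IsLowerHull a b g h) (hfh : ∀ i ∈ Set.Icc a b, f i ≤ h i) {i : ℕ}
    (hai : a ≤ i) (hib : i + 1 < b) (hbend : 0 < secondDiff f i) (hlt : f (i + 1) < g (i + 1)) :
    f (i + 1) < h (i + 1) := by
  obtain htouch | hstraight := hh.eq_or_straight i hai hib
  · rwa [htouch]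
  · have hleft := hfh i ⟨hai, by omega⟩
    have hright := hfh (i + 2) ⟨by omega, hib⟩
    simp only [secondDiff] at hbend hstraight
    linarith

lemma append (hl : IsLowerHull a m g h) (hr : IsLowerHull m b g h) {c σ : K}
    (hsupp : ∀ i ∈ Set.Icc a b, c + σ * (i : K) ≤ g i) (hm : c + σ * m = g m) (ham : a ≤ m)
    (hmb : m ≤ b) : IsLowerHull a b g h := by
  have hline (i : ℕ) := (secondDiff_affine c σ i).ge
  have hleft : ∀ i ∈ Set.Icc a m, c + σ * (i : K) ≤ h i :=
    hl.ge_of_convex (fun i hi ↦ hsupp i ⟨hi.1, hi.2.trans hmb⟩) fun i _ _ ↦ hline i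
  have hright : ∀ i ∈ Set.Icc m b, c + σ * (i : K) ≤ h i :=
    hr.ge_of_convex (fun i hi ↦ hsupp i ⟨ham.trans hi.1, hi.2⟩) fun i _ _ ↦ hline i
  refine ⟨hl.left, hr.right, fun i hi ↦ ?_, fun i hai hib ↦ ?_, fun i hai hib ↦ ?_⟩
  · obtain him | hmi := le_total i m
    exacts [hl.le i ⟨hi.1, him⟩, hr.le i ⟨hmi, hi.2⟩]
  · obtain him | rfl | hmi := lt_trichotomy (i + 1) m
    · exact hl.convex i hai him
    · have h₀ := hleft i ⟨hai, i.le_succ⟩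
      have h₂ := hright (i + 2) ⟨by omega, hib⟩
      have hbend := hline i
      simp only [secondDiff] at hbend ⊢
      linarith [hl.right]
    · exact hr.convex i (by omega) hib
  · obtain him | rfl | hmi := lt_trichotomy (i + 1) m
    · exact hl.eq_or_straight i hai him
    · exact .inl hl.right
    · exact hr.eq_or_straight i (by omega) hib

lemma exists_append {h₁ h₂ : ℕ → K} (hl : IsLowerHull a m g h₁) (hr : IsLowerHull m b g h₂)
    {c σ : K} (hsupp : ∀ i ∈ Set.Icc a b, c + σ * (i : K) ≤ g i) (hm : c + σ * m = g m)
    (ham : a ≤ m) (hmb : m ≤ b) : ∃ h, IsLowerHull a b g h := by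
  refine ⟨fun i ↦ if i ≤ m then h₁ i else h₂ i,
    append (hl.congr ham fun i hi ↦ if_pos hi.2) (hr.congr hmb fun i hi ↦ ?_) hsupp hm ham hmb⟩
  obtain rfl | hlt := hi.1.eq_or_lt
  · rw [if_pos le_rfl, hl.right, hr.left]
  · exact if_neg hlt.not_ge

end IsLowerHull

end Ring

section Hull

variable {K : Type*} [Field K] [LinearOrder K] [IsStrictOrderedRing K]

lemma exists_affine_eq_endpoints (g : ℕ → K) (a b : ℕ) :
    ∃ c σ : K, c + σ * a = g a ∧ c + σ * b = g b := by
  obtain rfl | hab := eq_or_ne a b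
  · exact ⟨g a, 0, by simp, by simp⟩
  · have hne : (b : K) - a ≠ 0 := sub_ne_zero.2 (Nat.cast_injective.ne hab.symm)
    refine ⟨g a - (g b - g a) / (b - a) * a, (g b - g a) / (b - a), by ring, ?_⟩
    field_simp
    ring

/-- Divide and conquer: a node lying farthest below the chord from `a` to `b` is a vertex of the
hull, because the parallel to the chord through it supports `g`. -/
theorem exists_isLowerHull (g : ℕ → K) {a b : ℕ} (hab : a ≤ b) : ∃ h, IsLowerHull a b g h := by
  induction hlen : b - a using Nat.strong_induction_on generalizing a b with
  | _ len ih =>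
    obtain ⟨c, σ, ha, hb⟩ := exists_affine_eq_endpoints g a b
    obtain ⟨m, hm, hmin⟩ := Finset.exists_min_image (Finset.Icc a b) (fun i ↦ g i - (c + σ * i))
      (Finset.nonempty_Icc.2 hab)
    simp only [Finset.mem_Icc] at hm hmin
    obtain habove | hbelow := le_or_gt (c + σ * m) (g m)
    · exact ⟨_, .of_affine ha hb fun i hi ↦ by linarith [hmin i hi]⟩
    · have ham : a ≠ m := by
        rintro rfl
        exact hbelow.ne' ha
      have hmb : m ≠ b := by
        rintro rfl
        exact hbelow.ne' hb
      obtain ⟨h₁, hl⟩ := ih (m - a) (by omega) hm.1 rfl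
      obtain ⟨h₂, hr⟩ := ih (b - m) (by omega) hm.2 rfl
      exact hl.exists_append hr (c := g m - σ * m) (σ := σ)
        (fun i hi ↦ by linarith [hmin i hi]) (by ring) hm.1 hm.2

end Hull

section Ceil

variable {K : Type*} [Ring K] [LinearOrder K] [FloorRing K]

/-- The least integral sequence that is at least `s` everywhere and greater than `s` at `j`; it is
the obstacle of which `ν^j` is the lower convex hull. -/
def strictCeilAt (s : ℕ → K) (j i : ℕ) : ℤ := if i = j then ⌊s i⌋ + 1 else ⌈s i⌉

lemma strictCeilAt_le_iff {s : ℕ → K} {j i : ℕ} {m : ℤ} :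
    strictCeilAt s j i ≤ m ↔ s i ≤ m ∧ (i = j → s i < m) := by
  unfold strictCeilAt
  split_ifs with hij
  · simpa [hij, Int.add_one_le_iff, Int.floor_lt] using le_of_lt
  · simp [hij, Int.ceil_le]

lemma le_strictCeilAt (s : ℕ → K) (j i : ℕ) : s i ≤ strictCeilAt s j i :=
  (strictCeilAt_le_iff.1 le_rfl).1

lemma lt_strictCeilAt_self (s : ℕ → K) (j : ℕ) : s j < strictCeilAt s j j :=
  (strictCeilAt_le_iff.1 le_rfl).2 rfl

lemma strictCeilAt_of_ne_of_eq [IsStrictOrderedRing K] {s : ℕ → K} {j i : ℕ} {m : ℤ} (hij : i ≠ j)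
    (hm : s i = m) : strictCeilAt s j i = m := by
  rw [strictCeilAt, if_neg hij, hm, Int.ceil_intCast]

end Ceil

section Newton

variable {n : ℕ} {d : ℤ} {ν : ℕ → ℚ}

lemma psum_zero (ν : ℕ → ℚ) : psum ν 0 = 0 := Finset.sum_range_zero ν

lemma psum_forwardDiff (f : ℕ → ℚ) (k : ℕ) : psum (fun i ↦ f (i + 1) - f i) k = f k - f 0 :=
  Finset.sum_range_sub f k

lemma secondDiff_psum (ν : ℕ → ℚ) (i : ℕ) : secondDiff (psum ν) i = ν (i + 1) - ν i := by
  simp only [secondDiff, psum, Finset.sum_range_succ]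
  ring

lemma isBreak_succ_iff {i : ℕ} : IsBreak n ν (i + 1) ↔ i + 1 < n ∧ 0 < secondDiff (psum ν) i := by
  simp [IsBreak, secondDiff_psum]

lemma isNewton_iff_secondDiff : IsNewton n d ν ↔
    (∀ i, i + 1 < n → 0 ≤ secondDiff (psum ν) i) ∧ psum ν n = d ∧
      ∀ i, i + 1 < n → 0 < secondDiff (psum ν) i → ∃ m : ℤ, psum ν (i + 1) = m := by
  simp only [IsNewton, secondDiff_psum, sub_nonneg, sub_pos]
  refine and_congr_right' (and_congr_right' ⟨fun h i ↦ h (i + 1) i.succ_pos, fun h j hj ↦ ?_⟩)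
  obtain ⟨i, rfl⟩ := Nat.exists_eq_add_one.2 hj
  exact h i

lemma IsLowerHull.isNewton {z : ℕ → ℤ} (hz : IsLowerHull 0 n (fun i ↦ (z i : ℚ)) (psum ν)) :
    IsNewton n (z n) ν :=
  isNewton_iff_secondDiff.2 ⟨fun i ↦ hz.convex i i.zero_le, hz.right, fun i hi hbend ↦
    ⟨z (i + 1), (hz.eq_or_straight i i.zero_le hi).resolve_right hbend.ne'⟩⟩

lemma exists_isLowerHull_psum (n : ℕ) {g : ℕ → ℚ} (hg : g 0 = 0) :
    ∃ μ : ℕ → ℚ, IsLowerHull 0 n g (psum μ) := by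
  obtain ⟨h, hh⟩ := exists_isLowerHull g n.zero_le
  refine ⟨fun i ↦ h (i + 1) - h i, hh.congr n.zero_le fun i _ ↦ ?_⟩
  rw [psum_forwardDiff, hh.left, hg, sub_zero]

lemma IsNewton.strictCeilAt_le_psum {η : ℕ → ℚ} (hη : IsNewton n d η) (hle : Preceq n η ν)
    {j : ℕ} (hlt : psum ν j < psum η j) {i : ℕ} (hi : i + 1 < n)
    (hbend : 0 < secondDiff (psum η) i) :
    (strictCeilAt (psum ν) j (i + 1) : ℚ) ≤ psum η (i + 1) := by
  obtain ⟨m, hm⟩ := (isNewton_iff_secondDiff.1 hη).2.2 i hi hbend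
  rw [hm, Int.cast_le, strictCeilAt_le_iff, ← hm]
  refine ⟨hle (i + 1) (by omega) hi.le, ?_⟩
  rintro rfl
  exact hlt

theorem newton_exists_max_below_breakpoint_general {j : ℕ}
    (hmono : ∀ i, i + 1 < n → ν i ≤ ν (i + 1)) (hend : psum ν n = d) (hj : IsBreak n ν j) :
    ∃ νj : ℕ → ℚ, IsNewton n d νj ∧ Preceq n νj ν ∧ psum ν j < psum νj j ∧
      ∀ η : ℕ → ℚ, IsNewton n d η → Preceq n η ν → psum ν j < psum η j → Preceq n η νj := by
  obtain ⟨i, rfl⟩ := Nat.exists_eq_add_one.2 hj.1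
  obtain ⟨hi, hbend⟩ := isBreak_succ_iff.1 hj
  set z := strictCeilAt (psum ν) (i + 1)
  have hz0 : z 0 = 0 := strictCeilAt_of_ne_of_eq (by omega) (by simp [psum_zero])
  have hzn : z n = d := strictCeilAt_of_ne_of_eq hi.ne' hend
  obtain ⟨μ, hμ⟩ := exists_isLowerHull_psum n (g := fun k ↦ (z k : ℚ)) (by simp [hz0])
  have hνμ : ∀ k ∈ Set.Icc 0 n, psum ν k ≤ psum μ k :=
    hμ.ge_of_convex (fun k _ ↦ le_strictCeilAt _ _ k) fun k _ hk ↦ by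
      rw [secondDiff_psum]
      exact sub_nonneg.2 (hmono k hk)
  refine ⟨μ, hzn ▸ hμ.isNewton, fun k _ hk ↦ hνμ k ⟨k.zero_le, hk⟩,
    hμ.lt_of_bend_of_lt hνμ i.zero_le hi hbend (lt_strictCeilAt_self _ _), ?_⟩
  intro η hη hle hlt k _ hk
  exact hμ.le_of_le_of_bend (by simp [hz0, psum_zero]) (by rw [hzn, hη.2.1])
    (fun l _ hl ↦ hη.strictCeilAt_le_psum hle hlt hl) k ⟨k.zero_le, hk⟩

end Newton

/-- GL_n instance of Lemma 2.2(1): for a break point `j` of `ν`, the set of Newton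
points `η ≼ ν` with `s_j(η) > s_j(ν)` has a (unique) maximal element `ν^j`. -/
theorem newton_exists_max_below_breakpoint (n : ℕ) (d : ℤ) (hn : 1 ≤ n)
    (ν : ℕ → ℚ) (hν : IsNewton n d ν) (j : ℕ) (hj : IsBreak n ν j) :
    ∃ νj : ℕ → ℚ, IsNewton n d νj ∧ Preceq n νj ν ∧ psum ν j < psum νj j ∧
      ∀ η : ℕ → ℚ, IsNewton n d η → Preceq n η ν → psum ν j < psum η j →
        Preceq n η νj :=
  newton_exists_max_below_breakpoint_general hν.1 hν.2.1 hj
end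

section
/- Let ν ∈ N_d(n), let j ∈ J(ν) be a break point of ν, and let ν^j be the unique maximal element of {η ∈ N_d(n) : η ≼ ν and s_j(η) > s_j(ν)} (which exists). Then s_i(ν^j) = s_i(ν) for every break point i ∈ J(ν) with i ≠ j. (GL_n instance of Lemma 2.2(2).) -/
/-!
Call `0`, `n` and the break points of `ν` the vertices of `ν`. Replacing the entries of `ν` between
two vertices `a < b` by their mean replaces the convex polygon of partial sums by its chord over
`[a, b]`. The result is again a Newton point `≼ ν`: its break points are vertices of `ν` outside
`(a, b)`, where the partial sums are unchanged, while at the break points of `ν` inside `(a, b)` the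
partial sums strictly increase. For break points `i ≠ j`, take the chord over `[i, n]` or `[0, i]`,
whichever contains `j` in its interior: the flattened point competes with `ν^j` and agrees with `ν`
at `i`, so maximality of `ν^j` gives `s_i(ν^j) ≤ s_i(ν)`.
-/

section

open Finset BigOperators

variable {n : ℕ} {d : ℤ} {ν : ℕ → ℚ} {a b k : ℕ}

theorem psum_add_sum_Ico (ν : ℕ → ℚ) (hab : a ≤ b) :
    psum ν a + ∑ i ∈ Ico a b, ν i = psum ν b :=
  sum_range_add_sum_Ico ν hab

/-- The vertices of the polygon of partial sums of `ν`, given by their abscissae: the break points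
together with the endpoints `0` and `n`. -/
def IsVertex (n : ℕ) (ν : ℕ → ℚ) (k : ℕ) : Prop := k = 0 ∨ k = n ∨ IsBreak n ν k

theorem IsBreak.isVertex (hk : IsBreak n ν k) : IsVertex n ν k := Or.inr (Or.inr hk)

theorem IsVertex.le (hk : IsVertex n ν k) : k ≤ n := by
  rcases hk with rfl | rfl | hk
  · exact Nat.zero_le n
  · exact le_rfl
  · exact hk.2.1.le

theorem IsNewton.monotoneOn (hν : IsNewton n d ν) : MonotoneOn ν (Set.Iio n) :=
  monotoneOn_of_le_add_one Set.ordConnected_Iio fun i _ _ hi ↦ hν.1 i hi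

theorem IsNewton.exists_psum_eq_intCast (hν : IsNewton n d ν) (hk : IsVertex n ν k) :
    ∃ m : ℤ, psum ν k = m := by
  rcases hk with rfl | rfl | ⟨hk_pos, hk_lt, hk_step⟩
  · exact ⟨0, by simp [psum]⟩
  · exact ⟨d, hν.2.1⟩
  · exact hν.2.2 k hk_pos hk_lt hk_step

/-- The tuple `ν` with its entries on `[a, b)` replaced by their mean: the polygon of partial sums
is replaced over `[a, b]` by its chord. If `b ≤ a`, then `flatten ν a b = ν`. -/
def flatten (ν : ℕ → ℚ) (a b : ℕ) : ℕ → ℚ :=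
  fun k ↦ if k ∈ Ico a b then 𝔼 i ∈ Ico a b, ν i else ν k

theorem flatten_of_mem (hk : k ∈ Ico a b) : flatten ν a b k = 𝔼 i ∈ Ico a b, ν i := if_pos hk

theorem flatten_of_notMem (hk : k ∉ Ico a b) : flatten ν a b k = ν k := if_neg hk

theorem monotoneOn_flatten {s : Set ℕ} (hν : MonotoneOn ν s) (hs : Set.Ico a b ⊆ s) :
    MonotoneOn (flatten ν a b) s := by
  have mem_s {i : ℕ} (hi : i ∈ Ico a b) : i ∈ s := hs (mem_Ico.1 hi)
  intro x hx y hy hxy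
  by_cases hxab : x ∈ Ico a b <;> by_cases hyab : y ∈ Ico a b
  · rw [flatten_of_mem hxab, flatten_of_mem hyab]
  · rw [flatten_of_mem hxab, flatten_of_notMem hyab]
    exact expect_le ⟨x, hxab⟩ fun i hi ↦ hν (mem_s hi) hy (by grind)
  · rw [flatten_of_notMem hxab, flatten_of_mem hyab]
    exact le_expect ⟨y, hyab⟩ fun i hi ↦ hν hx (mem_s hi) (by grind)
  · rw [flatten_of_notMem hxab, flatten_of_notMem hyab]
    exact hν hx hy hxy

theorem sum_flatten_Ico (ν : ℕ → ℚ) (a b : ℕ) :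
    ∑ i ∈ Ico a b, flatten ν a b i = ∑ i ∈ Ico a b, ν i := by
  rw [sum_congr rfl fun i hi ↦ flatten_of_mem hi, sum_const, card_smul_expect]

theorem psum_flatten_of_le_left (hk : k ≤ a) : psum (flatten ν a b) k = psum ν k :=
  sum_congr rfl fun _ hi ↦ flatten_of_notMem (by grind)

theorem psum_flatten_of_right_le (hab : a ≤ b) (hk : b ≤ k) :
    psum (flatten ν a b) k = psum ν k := by
  have sum_tail : ∑ i ∈ Ico b k, flatten ν a b i = ∑ i ∈ Ico b k, ν i :=
    sum_congr rfl fun i hi ↦ flatten_of_notMem (by grind)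
  simp only [← psum_add_sum_Ico _ hk, ← psum_add_sum_Ico _ hab, psum_flatten_of_le_left le_rfl,
    sum_flatten_Ico, sum_tail]

theorem psum_flatten_of_notMem_Ioo (hab : a ≤ b) (hk : k ∉ Set.Ioo a b) :
    psum (flatten ν a b) k = psum ν k := by
  rcases le_or_gt k a with hka | hak
  · exact psum_flatten_of_le_left hka
  · exact psum_flatten_of_right_le hab (not_lt.1 fun hkb ↦ hk ⟨hak, hkb⟩)

theorem psum_flatten_of_mem_Icc (hk : k ∈ Set.Icc a b) :
    psum (flatten ν a b) k = psum ν a + (k - a) * 𝔼 i ∈ Ico a b, ν i := by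
  have sum_eq : ∑ i ∈ Ico a k, flatten ν a b i = (k - a) * 𝔼 i ∈ Ico a b, ν i := by
    rw [sum_congr rfl fun i hi ↦ flatten_of_mem (Ico_subset_Ico_right hk.2 hi), sum_const,
      Nat.card_Ico, nsmul_eq_mul, Nat.cast_sub hk.1]
  rw [← psum_add_sum_Ico _ hk.1, psum_flatten_of_le_left le_rfl, sum_eq]

theorem mul_psum_flatten_sub_psum (hk : k ∈ Set.Icc a b) :
    (b - a) * (psum (flatten ν a b) k - psum ν k) =
      (k - a) * ∑ i ∈ Ico k b, ν i - (b - k) * ∑ i ∈ Ico a k, ν i := by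
  have hab : a ≤ b := hk.1.trans hk.2
  have mul_mean : (b - a) * 𝔼 i ∈ Ico a b, ν i = ∑ i ∈ Ico a k, ν i + ∑ i ∈ Ico k b, ν i := by
    rw [sum_Ico_consecutive ν hk.1 hk.2, ← card_mul_expect, Nat.card_Ico, Nat.cast_sub hab]
  rw [psum_flatten_of_mem_Icc hk, ← psum_add_sum_Ico ν hk.1]
  linear_combination (k - a) * mul_mean

theorem mul_step_le_mul_psum_flatten_sub_psum (hν : MonotoneOn ν (Set.Ico a b))
    (hk : k ∈ Set.Ioo a b) :
    (k - a) * (b - k) * (ν k - ν (k - 1)) ≤ (b - a) * (psum (flatten ν a b) k - psum ν k) := by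
  obtain ⟨hak, hkb⟩ := hk
  have ha_nonneg : (0 : ℚ) ≤ k - a := sub_nonneg.2 (mod_cast hak.le)
  have hb_nonneg : (0 : ℚ) ≤ b - k := sub_nonneg.2 (mod_cast hkb.le)
  have sum_left : ∑ i ∈ Ico a k, ν i ≤ (k - a) * ν (k - 1) := by
    simpa [Nat.cast_sub hak.le] using sum_le_card_nsmul (Ico a k) ν (ν (k - 1)) fun i hi ↦
      hν (by grind) (by grind) (by grind)
  have sum_right : (b - k) * ν k ≤ ∑ i ∈ Ico k b, ν i := by
    simpa [Nat.cast_sub hkb.le] using card_nsmul_le_sum (Ico k b) ν (ν k) fun i hi ↦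
      hν (by grind) (by grind) (by grind)
  calc (k - a) * (b - k) * (ν k - ν (k - 1))
      = (k - a) * ((b - k) * ν k) - (b - k) * ((k - a) * ν (k - 1)) := by ring
    _ ≤ (k - a) * ∑ i ∈ Ico k b, ν i - (b - k) * ∑ i ∈ Ico a k, ν i := by gcongr
    _ = (b - a) * (psum (flatten ν a b) k - psum ν k) :=
      (mul_psum_flatten_sub_psum ⟨hak.le, hkb.le⟩).symm

theorem psum_le_psum_flatten (hν : MonotoneOn ν (Set.Ico a b)) (hk : k ∈ Set.Ioo a b) :
    psum ν k ≤ psum (flatten ν a b) k := by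
  have ha_pos : (0 : ℚ) < k - a := sub_pos.2 (mod_cast hk.1)
  have hb_pos : (0 : ℚ) < b - k := sub_pos.2 (mod_cast hk.2)
  have step_nonneg : 0 ≤ ν k - ν (k - 1) := sub_nonneg.2 (hν (by grind) (by grind) (by grind))
  have gap_nonneg : 0 ≤ (b - a) * (psum (flatten ν a b) k - psum ν k) :=
    (mul_nonneg (mul_pos ha_pos hb_pos).le step_nonneg).trans
      (mul_step_le_mul_psum_flatten_sub_psum hν hk)
  exact sub_nonneg.1 (nonneg_of_mul_nonneg_right gap_nonneg (by linarith))

theorem psum_lt_psum_flatten (hν : MonotoneOn ν (Set.Ico a b)) (hk : k ∈ Set.Ioo a b)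
    (hstep : ν (k - 1) < ν k) : psum ν k < psum (flatten ν a b) k := by
  have ha_pos : (0 : ℚ) < k - a := sub_pos.2 (mod_cast hk.1)
  have hb_pos : (0 : ℚ) < b - k := sub_pos.2 (mod_cast hk.2)
  have gap_pos : 0 < (b - a) * (psum (flatten ν a b) k - psum ν k) :=
    (mul_pos (mul_pos ha_pos hb_pos) (sub_pos.2 hstep)).trans_le
      (mul_step_le_mul_psum_flatten_sub_psum hν hk)
  exact sub_pos.1 (pos_of_mul_pos_right gap_pos (by linarith))

theorem preceq_flatten (hν : MonotoneOn ν (Set.Ico a b)) (hab : a ≤ b) :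
    Preceq n (flatten ν a b) ν := by
  intro k _ _
  by_cases hk : k ∈ Set.Ioo a b
  · exact psum_le_psum_flatten hν hk
  · exact (psum_flatten_of_notMem_Ioo hab hk).ge

theorem IsBreak.notMem_Ioo_of_flatten (hk : IsBreak n (flatten ν a b) k) : k ∉ Set.Ioo a b := by
  intro hkab
  have hstep := hk.2.2
  rw [flatten_of_mem (by grind), flatten_of_mem (by grind)] at hstep
  exact hstep.false

theorem IsBreak.isVertex_of_flatten (hk : IsBreak n (flatten ν a b) k) (ha : IsVertex n ν a)
    (hb : IsVertex n ν b) : IsVertex n ν k := by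
  by_cases hka : k = a
  · exact hka ▸ ha
  by_cases hkb : k = b
  · exact hkb ▸ hb
  have hk_outside := hk.notMem_Ioo_of_flatten
  obtain ⟨hk_pos, hk_lt, hstep⟩ := hk
  rw [flatten_of_notMem (by grind), flatten_of_notMem (by grind)] at hstep
  exact IsBreak.isVertex ⟨hk_pos, hk_lt, hstep⟩

theorem isNewton_flatten (hν : IsNewton n d ν) (ha : IsVertex n ν a) (hb : IsVertex n ν b)
    (hab : a ≤ b) : IsNewton n d (flatten ν a b) := by
  refine ⟨fun i hi ↦ ?_, ?_, fun k hk_pos hk_lt hstep ↦ ?_⟩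
  · exact monotoneOn_flatten hν.monotoneOn (fun _ hx ↦ hx.2.trans_le hb.le)
      (i.lt_succ_self.trans hi) hi i.le_succ
  · rw [psum_flatten_of_right_le hab hb.le, hν.2.1]
  · have hk : IsBreak n (flatten ν a b) k := ⟨hk_pos, hk_lt, hstep⟩
    rw [psum_flatten_of_notMem_Ioo hab hk.notMem_Ioo_of_flatten]
    exact hν.exists_psum_eq_intCast (hk.isVertex_of_flatten ha hb)

theorem IsBreak.exists_isVertex_mem_Ioo_notMem_Ioo {i j : ℕ} (hi : IsBreak n ν i)
    (hj : IsBreak n ν j) (hij : i ≠ j) :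
    ∃ a b, IsVertex n ν a ∧ IsVertex n ν b ∧ j ∈ Set.Ioo a b ∧ i ∉ Set.Ioo a b := by
  rcases hij.lt_or_gt with hlt | hgt
  · exact ⟨i, n, hi.isVertex, Or.inr (Or.inl rfl), ⟨hlt, hj.2.1⟩, fun h ↦ h.1.false⟩
  · exact ⟨0, i, Or.inl rfl, hi.isVertex, ⟨hj.1, hgt⟩, fun h ↦ h.2.false⟩

end

theorem newton_max_below_breakpoint_eq_at_other_breaks_general (n : ℕ) (d : ℤ)
    (ν : ℕ → ℚ) (hν : IsNewton n d ν) (j : ℕ) (hj : IsBreak n ν j)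
    (μ : ℕ → ℚ) (hprec : Preceq n μ ν)
    (hupper : ∀ η : ℕ → ℚ, IsNewton n d η → Preceq n η ν → psum ν j < psum η j →
      Preceq n η μ) :
    ∀ i, IsBreak n ν i → i ≠ j → psum μ i = psum ν i := by
  intro i hi hij
  obtain ⟨a, b, ha, hb, hjab, hiab⟩ := hi.exists_isVertex_mem_Ioo_notMem_Ioo hj hij
  have hab : a ≤ b := (hjab.1.trans hjab.2).le
  have hmono : MonotoneOn ν (Set.Ico a b) :=
    hν.monotoneOn.mono fun _ hx ↦ hx.2.trans_le hb.le
  have flatten_preceq : Preceq n (flatten ν a b) μ :=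
    hupper _ (isNewton_flatten hν ha hb hab) (preceq_flatten hmono hab)
      (psum_lt_psum_flatten hmono hjab hj.2.2)
  apply le_antisymm
  · calc psum μ i ≤ psum (flatten ν a b) i := flatten_preceq i hi.1 hi.2.1.le
      _ = psum ν i := psum_flatten_of_notMem_Ioo hab hiab
  · exact hprec i hi.1 hi.2.1.le

/-- GL_n instance of Lemma 2.2(2): if `νj` is the unique maximal element of the set of
Newton points `η ≼ ν` with `s_j(η) > s_j(ν)` (for a break point `j` of `ν`), then
`s_i(νj) = s_i(ν)` for every break point `i ≠ j` of `ν`. -/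
theorem newton_max_below_breakpoint_eq_at_other_breaks (n : ℕ) (d : ℤ) (hn : 1 ≤ n)
    (ν : ℕ → ℚ) (hν : IsNewton n d ν) (j : ℕ) (hj : IsBreak n ν j)
    (νj : ℕ → ℚ) (hνj : IsNewton n d νj) (hprec : Preceq n νj ν)
    (hbrk : psum ν j < psum νj j)
    (hmax : ∀ η : ℕ → ℚ, IsNewton n d η → Preceq n η ν → psum ν j < psum η j →
      Preceq n η νj) :
    ∀ i, IsBreak n ν i → i ≠ j → psum νj i = psum ν i :=
  newton_max_below_breakpoint_eq_at_other_breaks_general n d ν hν j hj νj hprec hmax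
end

section
/- Let n ≥ 1 and let ν' = (ν'_1, …, ν'_n) and ν = (ν_1, …, ν_n) be nondecreasing tuples of rational numbers with ν'_1 + … + ν'_n = ν_1 + … + ν_n, with s_j(ν') ≥ s_j(ν) for all 1 ≤ j ≤ n, and with ν' ≠ ν. Then there exists an index 1 ≤ j < n with ν_j < ν_{j+1} and s_j(ν') > s_j(ν). (Break-point separation for comparable Newton points, used in the proofs of Lemma 2.2(3) and Remark 2.3: if ν' ≼ ν and ν' ≠ ν then pr_(j)(ν') ≠ pr_(j)(ν) for some break point j of ν.) -/
/-!
Let `D j = s_j(ν') - s_j(ν)`, and let `j` be the first index at which `D` attains its maximum over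
`0, …, n`. Since `D` vanishes at both ends but is positive somewhere, `0 < j < n` and `D j > 0`.
By the choice of `j`, `D` increases strictly into `j` and does not increase out of it, so that
`ν_j < ν'_j ≤ ν'_{j+1} ≤ ν_{j+1}`: the index `j` is a break point of `ν`.
-/

section Order

variable {α : Type*} [LinearOrder α] {D : ℕ → α} {k n : ℕ}

theorem exists_first_max_le (D : ℕ → α) (n : ℕ) :
    ∃ j ≤ n, (∀ i ≤ n, D i ≤ D j) ∧ ∀ i < j, D i < D j := by
  classical
  have hmax : ∃ j, j ≤ n ∧ ∀ i ≤ n, D i ≤ D j := by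
    simpa using (Finset.range (n + 1)).exists_max_image D Finset.nonempty_range_add_one
  obtain ⟨hjn, hj⟩ := Nat.find_spec hmax
  refine ⟨Nat.find hmax, hjn, hj, fun i hij => ?_⟩
  by_contra! hji
  exact Nat.find_min hmax hij ⟨hij.le.trans hjn, fun m hm => (hj m hm).trans hji⟩

theorem exists_interior_peak (hk : k ≤ n) (hleft : D 0 < D k) (hright : D n < D k) :
    ∃ j, j + 1 < n ∧ D j < D (j + 1) ∧ D (j + 2) ≤ D (j + 1) ∧ D k ≤ D (j + 1) := by
  obtain ⟨m, hmn, hmax, hfirst⟩ := exists_first_max_le D n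
  have hm_ne_zero : m ≠ 0 := by
    rintro rfl
    exact (hmax k hk).not_gt hleft
  have hm_ne_n : m ≠ n := by
    rintro rfl
    exact (hmax k hk).not_gt hright
  obtain ⟨j, rfl⟩ := Nat.exists_eq_succ_of_ne_zero hm_ne_zero
  have hjn : j + 1 < n := hmn.lt_of_ne hm_ne_n
  exact ⟨j, hjn, hfirst j j.lt_succ_self, hmax (j + 2) hjn, hmax k hk⟩

end Order

section PartialSums

variable {α : Type*} [LinearOrder α] {k n : ℕ}

theorem exists_sum_range_lt_of_ne [AddCommMonoid α] [IsLeftCancelAdd α] {f g : ℕ → α}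
    (hle : ∀ j < n, ∑ i ∈ Finset.range (j + 1), f i ≤ ∑ i ∈ Finset.range (j + 1), g i)
    (hne : ∃ i < n, g i ≠ f i) :
    ∃ k ≤ n, ∑ i ∈ Finset.range k, f i < ∑ i ∈ Finset.range k, g i := by
  by_contra! hge
  have heq : ∀ k ≤ n, ∑ i ∈ Finset.range k, g i = ∑ i ∈ Finset.range k, f i
    | 0, _ => by simp
    | k + 1, hk => (hge (k + 1) hk).antisymm (hle k hk)
  obtain ⟨i, hi, hgf⟩ := hne
  have hsucc := heq (i + 1) hi
  rw [Finset.sum_range_succ, Finset.sum_range_succ, heq i hi.le] at hsucc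
  exact hgf (add_left_cancel hsucc)

theorem exists_breakpoint_strict_general [AddCommGroup α] [IsOrderedAddMonoid α] {ν' ν : ℕ → α}
    (hmono' : ∀ i, i + 1 < n → ν' i ≤ ν' (i + 1))
    (hsum : ∑ i ∈ Finset.range n, ν' i ≤ ∑ i ∈ Finset.range n, ν i) (hk : k ≤ n)
    (hlt : ∑ i ∈ Finset.range k, ν i < ∑ i ∈ Finset.range k, ν' i) :
    ∃ j, 0 < j ∧ j < n ∧ ν (j - 1) < ν j ∧
      ∑ i ∈ Finset.range j, ν i < ∑ i ∈ Finset.range j, ν' i := by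
  let D (j : ℕ) : α := ∑ i ∈ Finset.range j, (ν' i - ν i)
  have hD_pos (j : ℕ) :
      0 < D j ↔ ∑ i ∈ Finset.range j, ν i < ∑ i ∈ Finset.range j, ν' i := by
    simp only [D, Finset.sum_sub_distrib, sub_pos]
  have hD_succ (j : ℕ) : D (j + 1) = D j + (ν' j - ν j) := Finset.sum_range_succ _ _
  have hDk : 0 < D k := (hD_pos k).2 hlt
  have hDn : D n ≤ 0 := not_lt.1 fun h => hsum.not_gt ((hD_pos n).1 h)
  obtain ⟨j, hjn, hup, hdown, hkj⟩ := exists_interior_peak hk hDk (hDn.trans_lt hDk)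
  have hlt_j : ν j < ν' j := by simpa [hD_succ] using hup
  have hle_succ : ν' (j + 1) ≤ ν (j + 1) := by simpa [hD_succ (j + 1)] using hdown
  have hbreak : ν j < ν (j + 1) := hlt_j.trans_le ((hmono' j hjn).trans hle_succ)
  exact ⟨j + 1, j.succ_pos, hjn, hbreak, (hD_pos (j + 1)).1 (hDk.trans_le hkj)⟩

end PartialSums

/-- Break-point separation for comparable tuples (used in the proofs of
Lemma 2.2(3) and Remark 2.3): if `ν'` and `ν` are nondecreasing tuples of length
`n` with equal total sums, `s_j(ν') ≥ s_j(ν)` for all `j`, and `ν' ≠ ν` (as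
tuples), then there is a break point `j` of `ν` (i.e. `0 < j < n` with
`ν (j-1) < ν j`) with `s_j(ν') > s_j(ν)`. Here `s_j` is the sum of the first `j`
entries (0-indexed). -/
theorem exists_breakpoint_strict (n : ℕ) (hn : 1 ≤ n) (ν' ν : ℕ → ℚ)
    (hmono' : ∀ i, i + 1 < n → ν' i ≤ ν' (i + 1))
    (hmono : ∀ i, i + 1 < n → ν i ≤ ν (i + 1))
    (hsum : ∑ i ∈ Finset.range n, ν' i = ∑ i ∈ Finset.range n, ν i)
    (hdom : ∀ j, 1 ≤ j → j ≤ n →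
      ∑ i ∈ Finset.range j, ν i ≤ ∑ i ∈ Finset.range j, ν' i)
    (hne : ∃ i, i < n ∧ ν' i ≠ ν i) :
    ∃ j, 0 < j ∧ j < n ∧ ν (j - 1) < ν j ∧
      ∑ i ∈ Finset.range j, ν i < ∑ i ∈ Finset.range j, ν' i := by
  obtain ⟨k, hk, hlt⟩ := exists_sum_range_lt_of_ne (fun j => hdom (j + 1) j.succ_pos) hne
  exact exists_breakpoint_strict_general hmono' hsum.le hk hlt
end

section
/- Fix integers n ≥ 1 and d and let ν ∈ N_d(n) be a Newton point. Write the distinct values of ν as λ_1 < … < λ_r with multiplicities n_1, …, n_r, and set m_i = n_i·λ_i ∈ ℤ. Then Σ_{j=1}^{n−1} (⌈s_j(ν)⌉ − s_j(ν)) = (1/2)·(n − Σ_{i=1}^{r} gcd(|m_i|, n_i)). (GL_n instance of the identity of Remark 2.1(2): for b with Newton point ν and κ_G(b) = μ̄ one has δ(ν, μ) = ⟨ρ, μ − ν⟩ + (1/2)·def(b), where for GL_n the defect is def(b) = n − Σ_i gcd(|m_i|, n_i), δ(ν, μ) = Σ_j (⌈s_j(ν)⌉ − s_j(μ)) and ⟨ρ,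 μ − ν⟩ = Σ_j (s_j(ν) − s_j(μ)) for any dominant integral μ with ν ≼ μ.) -/
/-- The start index (cumulative multiplicity) of the `i`-th block. -/
def cum {r : ℕ} (nn : Fin r → ℕ) (i : Fin r) : ℕ := ∑ i' ∈ Finset.Iio i, nn i'

/-!
Each block contributes separately, because `psum ν` is an integer at the block boundaries: on a
block of `N` equal slopes `x` with `N * x = m` an integer, the contribution of the block is
`∑ k < N, Int.fract (-(k * x))`. The reflection `k ↦ N - k` turns this sum into
`∑ k < N, Int.fract (k * x)`. Since `Int.fract y + Int.fract (-y)` is `0` if `y` is an integer and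
`1` otherwise, twice the contribution is `N` minus the number of `k < N` with `N ∣ k * m`, which is
`gcd m N`.
-/

open Finset

theorem card_filter_range_dvd_mul {n : ℕ} (hn : n ≠ 0) (m : ℕ) :
    #{k ∈ range n | n ∣ k * m} = m.gcd n := by
  have hper : Function.Periodic (fun k ↦ n ∣ k * m) n := fun k ↦ by
    simp only [add_mul, Nat.dvd_add_left (dvd_mul_right n m)]
  have hdvd (k : ℕ) : n ∣ k * m ↔ n / n.gcd m ∣ k := by
    rw [Nat.div_dvd_iff_dvd_mul (Nat.gcd_dvd_left n m) (Nat.gcd_pos_of_pos_left m hn.bot_lt),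
      mul_comm (n.gcd m) k, Nat.dvd_mul_gcd_iff_dvd_mul]
  calc #{k ∈ range n | n ∣ k * m}
      = #{k ∈ Ico 1 (1 + n) | n ∣ k * m} := by
        rw [Nat.filter_Ico_card_eq_of_periodic 1 n _ hper, Nat.count_eq_card_filter_range]
    _ = #{k ∈ Ioc 0 n | n / n.gcd m ∣ k} := by
        simp only [hdvd]
        congr 2
        ext k
        simp only [mem_Ico, mem_Ioc]
        lia
    _ = m.gcd n := by
        rw [Nat.Ioc_filter_dvd_card_eq_div, Nat.div_div_self (Nat.gcd_dvd_left n m) hn,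
          Nat.gcd_comm]

section FractionalParts

variable {K : Type*} [Field K] [LinearOrder K] [IsStrictOrderedRing K] [FloorRing K]

theorem ceil_sub_self_eq_fract_neg (x : K) : (⌈x⌉ : K) - x = Int.fract (-x) := by
  rw [Int.fract, Int.floor_neg, Int.cast_neg]
  ring

theorem fract_add_fract_neg (x : K) :
    Int.fract x + Int.fract (-x) = 1 - if Int.fract x = 0 then 1 else 0 := by
  split_ifs with h
  · rw [h, Int.fract_neg_eq_zero.mpr h]
    ring
  · rw [Int.fract_neg h]
    ring

variable {N : ℕ} {m : ℤ} {x : K}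

theorem fract_natCast_mul_eq_zero_iff (hN : N ≠ 0) (hx : N * x = m) (k : ℕ) :
    Int.fract (k * x) = 0 ↔ N ∣ k * m.natAbs := by
  have hN' : (N : K) ≠ 0 := Nat.cast_ne_zero.mpr hN
  have hscale (z : ℤ) : (z : K) = k * x ↔ (k : ℤ) * m = N * z := by
    rw [← mul_right_inj' hN', mul_left_comm, hx, eq_comm]
    norm_cast
  rw [Int.fract_eq_zero_iff, Set.mem_range, ← Int.natAbs_natCast k, ← Int.natAbs_mul,
    ← Int.natCast_dvd]
  exact exists_congr hscale

theorem sum_range_fract_neg_natCast_mul (hx : N * x = m) :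
    ∑ k ∈ range N, Int.fract (-(k * x)) = ∑ k ∈ range N, Int.fract (k * x) := by
  have hreflect : ∑ k ∈ range (N + 1), Int.fract (-(k * x)) =
      ∑ k ∈ range (N + 1), Int.fract (k * x) := by
    rw [← sum_flip]
    refine sum_congr rfl fun k hk ↦ ?_
    rw [Nat.cast_sub (mem_range_succ_iff.mp hk), sub_mul, hx, neg_sub, Int.fract_sub_intCast]
  simpa only [sum_range_succ, hx, ← Int.cast_neg, Int.fract_intCast, add_zero] using hreflect

theorem sum_range_fract_natCast_mul (hx : N * x = m) :
    ∑ k ∈ range N, Int.fract (k * x) = (1 / 2) * (N - (Nat.gcd m.natAbs N : K)) := by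
  obtain rfl | hN := eq_or_ne N 0
  · have hm : m = 0 := by simpa using hx.symm
    simp [hm]
  have hdouble : ∑ k ∈ range N, Int.fract (k * x) + ∑ k ∈ range N, Int.fract (k * x) =
      N - (Nat.gcd m.natAbs N : K) := by
    nth_rw 2 [← sum_range_fract_neg_natCast_mul hx]
    simp only [← sum_add_distrib, fract_add_fract_neg, fract_natCast_mul_eq_zero_iff hN hx]
    rw [sum_sub_distrib, sum_boole, card_filter_range_dvd_mul hN, sum_const, card_range,
      nsmul_one]
  linarith

end FractionalParts

section Blocks

variable {r : ℕ}

theorem partialSum_last {M : Type*} [AddCommMonoid M] (f : Fin r → M) :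
    Fin.partialSum f (Fin.last r) = ∑ i, f i := by
  simp [Fin.partialSum, List.sum_take_ofFn]

theorem cum_eq_partialSum (nn : Fin r → ℕ) (i : Fin r) :
    cum nn i = Fin.partialSum nn i.castSucc := by
  rw [cum, Fin.partialSum, List.sum_take_ofFn]
  congr 1
  ext j
  simp only [mem_Iio, mem_filter_univ, Fin.lt_def, Fin.val_castSucc]

theorem sum_range_partialSum {M : Type*} [AddCommMonoid M] (f : ℕ → M) (nn : Fin r → ℕ)
    (i : Fin (r + 1)) :
    ∑ j ∈ range (Fin.partialSum nn i), f j =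
      Fin.partialSum (fun i' ↦ ∑ k ∈ range (nn i'), f (cum nn i' + k)) i := by
  induction i using Fin.induction with
  | zero => simp
  | succ i ih => rw [Fin.partialSum_succ, Fin.partialSum_succ, sum_range_add, ih, cum_eq_partialSum]

theorem psum_add_of_forall_eq {ν : ℕ → ℚ} {s k : ℕ} {l : ℚ}
    (h : ∀ j, s ≤ j → j < s + k → ν j = l) : psum ν (s + k) = psum ν s + k * l := by
  have hconst : ∑ t ∈ range k, ν (s + t) = ∑ _ ∈ range k, l :=
    sum_congr rfl fun t ht ↦ h _ (Nat.le_add_right s t) (by simpa using ht)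
  rw [psum, psum, sum_range_add, hconst, sum_const, card_range, nsmul_eq_mul]

variable {ν : ℕ → ℚ} {lam : Fin r → ℚ} {nn : Fin r → ℕ} {m : Fin r → ℤ}

theorem psum_partialSum
    (hval : ∀ (i : Fin r) (j : ℕ), cum nn i ≤ j → j < cum nn i + nn i → ν j = lam i)
    (hm : ∀ i, (m i : ℚ) = (nn i : ℚ) * lam i) (i : Fin (r + 1)) :
    psum ν (Fin.partialSum nn i) = Fin.partialSum m i := by
  induction i using Fin.induction with
  | zero => simp [psum]
  | succ i ih =>
    rw [Fin.partialSum_succ, Fin.partialSum_succ, Int.cast_add, hm, ← ih, ← cum_eq_partialSum]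
    exact psum_add_of_forall_eq (hval i)

theorem sum_block_ceil_psum_sub_psum
    (hval : ∀ (i : Fin r) (j : ℕ), cum nn i ≤ j → j < cum nn i + nn i → ν j = lam i)
    (hm : ∀ i, (m i : ℚ) = (nn i : ℚ) * lam i) (i : Fin r) :
    ∑ k ∈ range (nn i), ((⌈psum ν (cum nn i + k)⌉ : ℚ) - psum ν (cum nn i + k)) =
      (1 / 2) * ((nn i : ℚ) - (Nat.gcd (m i).natAbs (nn i) : ℚ)) := by
  have hpsum : ∀ k ∈ range (nn i),
      psum ν (cum nn i + k) = (Fin.partialSum m i.castSucc : ℤ) + k * lam i := fun k hk ↦ by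
    have hk' : k < nn i := mem_range.mp hk
    rw [psum_add_of_forall_eq fun j hj hjk ↦ hval i j hj (by lia), cum_eq_partialSum,
      psum_partialSum hval hm]
  rw [← sum_range_fract_natCast_mul (hm i).symm, ← sum_range_fract_neg_natCast_mul (hm i).symm]
  refine sum_congr rfl fun k hk ↦ ?_
  rw [hpsum k hk, ceil_sub_self_eq_fract_neg, neg_add, ← Int.cast_neg, Int.fract_intCast_add]

end Blocks

theorem sum_Icc_one_eq_sum_range {M : Type*} [AddCommMonoid M] {f : ℕ → M} (hf : f 0 = 0)
    (n : ℕ) : ∑ j ∈ Icc 1 (n - 1), f j = ∑ j ∈ range n, f j := by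
  refine sum_subset (fun j hj ↦ ?_) fun j hj hj' ↦ ?_
  · rw [mem_Icc] at hj
    rw [mem_range]
    lia
  · obtain rfl : j = 0 := by
      rw [mem_range] at hj
      rw [mem_Icc] at hj'
      lia
    exact hf

theorem delta_eq_half_defect_general {n r : ℕ} {ν : ℕ → ℚ} {lam : Fin r → ℚ} {nn : Fin r → ℕ}
    {m : Fin r → ℤ} (hsumn : ∑ i, nn i = n)
    (hval : ∀ (i : Fin r) (j : ℕ), cum nn i ≤ j → j < cum nn i + nn i → ν j = lam i)
    (hm : ∀ i, (m i : ℚ) = (nn i : ℚ) * lam i) :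
    ∑ j ∈ Icc 1 (n - 1), ((⌈psum ν j⌉ : ℚ) - psum ν j) =
      (1 / 2) * ((n : ℚ) - ∑ i, (Nat.gcd (m i).natAbs (nn i) : ℚ)) :=
  calc ∑ j ∈ Icc 1 (n - 1), ((⌈psum ν j⌉ : ℚ) - psum ν j)
      = ∑ j ∈ range (Fin.partialSum nn (Fin.last r)), ((⌈psum ν j⌉ : ℚ) - psum ν j) := by
        rw [sum_Icc_one_eq_sum_range (by simp [psum]), partialSum_last, hsumn]
    _ = ∑ i, ∑ k ∈ range (nn i),
          ((⌈psum ν (cum nn i + k)⌉ : ℚ) - psum ν (cum nn i + k)) := by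
        rw [sum_range_partialSum, partialSum_last]
    _ = ∑ i, (1 / 2) * ((nn i : ℚ) - (Nat.gcd (m i).natAbs (nn i) : ℚ)) :=
        sum_congr rfl fun i _ ↦ sum_block_ceil_psum_sub_psum hval hm i
    _ = (1 / 2) * ((n : ℚ) - ∑ i, (Nat.gcd (m i).natAbs (nn i) : ℚ)) := by
        rw [← mul_sum, sum_sub_distrib, ← Nat.cast_sum, hsumn]

/-- GL_n instance of the identity of Remark 2.1(2): for a Newton point `ν` with
distinct slopes `λ_1 < … < λ_r` of multiplicities `n_1, …, n_r` and integers
`m_i = n_i·λ_i`, one has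
`Σ_{j=1}^{n-1} (⌈s_j(ν)⌉ - s_j(ν)) = (1/2)·(n - Σ_i gcd(|m_i|, n_i))`,
the right-hand side being half the defect of an element with Newton point `ν`. -/
theorem delta_eq_half_defect (n : ℕ) (hn : 1 ≤ n) (d : ℤ) (ν : ℕ → ℚ)
    (hν : IsNewton n d ν)
    (r : ℕ) (lam : Fin r → ℚ) (nn : Fin r → ℕ) (m : Fin r → ℤ)
    (hlam : StrictMono lam) (hpos : ∀ i, 0 < nn i) (hsumn : ∑ i, nn i = n)
    (hval : ∀ (i : Fin r) (j : ℕ), cum nn i ≤ j → j < cum nn i + nn i → ν j = lam i)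
    (hm : ∀ i, (m i : ℚ) = (nn i : ℚ) * lam i) :
    ∑ j ∈ Finset.Icc 1 (n - 1), ((⌈psum ν j⌉ : ℚ) - psum ν j) =
      (1 / 2) * ((n : ℚ) - ∑ i, (Nat.gcd (m i).natAbs (nn i) : ℚ)) :=
  delta_eq_half_defect_general hsumn hval hm
end
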